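/- For every n ≥ 1 and every (k_1,…,k_n) ∈ ℤ^n, α(n;k_1,…,k_n) = Σ (−1)^{s(A)}, where the sum runs over those A ∈ 𝒯_n(k_1,…,k_n) whose underlying array satisfies the condition: a_{i,j−1} ≤ a_{i,j} ≤ a_{i,j+1} implies a_{i−1,j−1} < a_{i−1,j}. -/

import Mathlib

/-- A triangular array of size `n`, encoded as a function `ℕ → ℕ → ℤ` whose
meaningful entries are `a i j` for `1 ≤ j ≤ i ≤ n` (row `i` has entries
`a i 1, …, a i i`), normalized to be `0` outside this region. -/
def IsTri (n : ℕ) (a : ℕ → ℕ → ℤ) : Prop :=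
  ∀ i j, ¬ (1 ≤ j ∧ j ≤ i ∧ i ≤ n) → a i j = 0

/-- A Monotone Triangle of size `n`: strict increase along rows and weak
increase along North-East and South-East diagonals. -/
def IsMT (n : ℕ) (a : ℕ → ℕ → ℤ) : Prop :=
  IsTri n a ∧
  (∀ i j, 1 ≤ j → j + 1 ≤ i → i ≤ n → a i j < a i (j + 1)) ∧
  (∀ i j, 1 ≤ j → j ≤ i → i + 1 ≤ n →
    a (i + 1) j ≤ a i j ∧ a i j ≤ a (i + 1) (j + 1))

/-- A Generalized Monotone Triangle (GMT) of size `n`. -/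
def IsGMT (n : ℕ) (a : ℕ → ℕ → ℤ) : Prop :=
  IsTri n a ∧
  -- (1) each entry is weakly bounded by its SW- and SE-neighbour
  (∀ i j, 1 ≤ j → j ≤ i → i + 1 ≤ n →
    min (a (i + 1) j) (a (i + 1) (j + 1)) ≤ a i j ∧
    a i j ≤ max (a (i + 1) j) (a (i + 1) (j + 1))) ∧
  -- (2) three weakly increasing consecutive entries force strict increase above
  (∀ i j, 1 ≤ j → j + 1 ≤ i → i + 1 ≤ n →
    a (i + 1) j ≤ a (i + 1) (j + 1) → a (i + 1) (j + 1) ≤ a (i + 1) (j + 2) →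
    a i j < a i (j + 1)) ∧
  -- (3) equality over a strict descent forces an equal neighbour
  (∀ i j, 1 ≤ j → j ≤ i → i + 1 ≤ n →
    (a i j = a (i + 1) j → a (i + 1) (j + 1) < a (i + 1) j →
      2 ≤ j ∧ a i (j - 1) = a i j) ∧
    (a (i + 1) (j + 1) < a (i + 1) j → a (i + 1) (j + 1) = a i j →
      j + 1 ≤ i ∧ a i (j + 1) = a i j))

/-- The bottom row of a triangular array of size `n` is `(k 0, …, k (n-1))`
(1-indexed in the array). -/
def BottomRow (n : ℕ) (a : ℕ → ℕ → ℤ) (k : Fin n → ℤ) : Prop :=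
  ∀ j : Fin n, a n (j.1 + 1) = k j

/-- The set of Monotone Triangles of size `n` with bottom row `k`. -/
def MTset (n : ℕ) (k : Fin n → ℤ) : Set (ℕ → ℕ → ℤ) :=
  {a | IsMT n a ∧ BottomRow n a k}

/-- The set `𝒢ₙ(k)` of Generalized Monotone Triangles of size `n` with bottom row `k`. -/
def GMTset (n : ℕ) (k : Fin n → ℤ) : Set (ℕ → ℕ → ℤ) :=
  {a | IsGMT n a ∧ BottomRow n a k}

/-- The positions `(i, j)` of newcomers of a triangular array:
`a (i+1) j > a i j > a (i+1) (j+1)`. -/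
def newcomersF (n : ℕ) (a : ℕ → ℕ → ℤ) : Finset (ℕ × ℕ) :=
  ((Finset.range (n + 1)) ×ˢ (Finset.range (n + 1))).filter (fun p =>
    1 ≤ p.2 ∧ p.2 ≤ p.1 ∧ p.1 + 1 ≤ n ∧
    a p.1 p.2 < a (p.1 + 1) p.2 ∧ a (p.1 + 1) (p.2 + 1) < a p.1 p.2)

/-- The positions `(i, j)` of sign-changing pairs `(a i j, a i (j+1))` of a
triangular array: two equal consecutive entries whose interlaced neighbour
below is also equal to them. -/
def scPairsF (n : ℕ) (a : ℕ → ℕ → ℤ) : Finset (ℕ × ℕ) :=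
  ((Finset.range (n + 1)) ×ˢ (Finset.range (n + 1))).filter (fun p =>
    1 ≤ p.2 ∧ p.2 + 1 ≤ p.1 ∧ p.1 + 1 ≤ n ∧
    a p.1 p.2 = a p.1 (p.2 + 1) ∧ a (p.1 + 1) (p.2 + 1) = a p.1 p.2)

/-- `sc(A)`: the total number of newcomers and sign-changing pairs of `A`. -/
def scT (n : ℕ) (a : ℕ → ℕ → ℤ) : ℕ :=
  (newcomersF n a).card + (scPairsF n a).card

/-- `IsAlpha N f` asserts that `f` is the polynomial function
`α(N; k₁, …, k_N)`: it is given by a polynomial with rational coefficients of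
degree at most `N - 1` in each variable, and its value at every strictly
increasing integer sequence equals the number of Monotone Triangles with that
bottom row. -/
def IsAlpha (N : ℕ) (f : (Fin N → ℤ) → ℚ) : Prop :=
  (∃ P : MvPolynomial (Fin N) ℚ, (∀ i : Fin N, P.degreeOf i ≤ N - 1) ∧
    ∀ k : Fin N → ℤ, f k = MvPolynomial.eval (fun i => (k i : ℚ)) P) ∧
  (∀ k : Fin N → ℤ, StrictMono k → f k = ((MTset N k).ncard : ℚ))

/-- Conditions on a triangular array `a` of size `n` together with a set `S` of
special entries (positions `(i,j)` with `1 < j < i ≤ n`, no two adjacent in the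
same row): special entries equal both their parents, and every entry that is
not a parent of a special entry lies weakly between its two lower neighbours if
they weakly increase, and strictly between them if they strictly decrease (in
which case it is an inversion). -/
def SpecOK (n : ℕ) (a : ℕ → ℕ → ℤ) (S : Finset (ℕ × ℕ)) : Prop :=
  (∀ p ∈ S, 1 < p.2 ∧ p.2 < p.1 ∧ p.1 ≤ n) ∧
  (∀ p ∈ S, ∀ q ∈ S, p.1 = q.1 → q.2 ≠ p.2 + 1) ∧
  (∀ p ∈ S, a (p.1 - 1) (p.2 - 1) = a p.1 p.2 ∧ a (p.1 - 1) p.2 = a p.1 p.2) ∧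
  (∀ i j, 1 ≤ j → j ≤ i → i + 1 ≤ n → (i + 1, j) ∉ S → (i + 1, j + 1) ∉ S →
    (a (i + 1) j ≤ a (i + 1) (j + 1) →
      a (i + 1) j ≤ a i j ∧ a i j ≤ a (i + 1) (j + 1)) ∧
    (a (i + 1) (j + 1) < a (i + 1) j →
      a (i + 1) (j + 1) < a i j ∧ a i j < a (i + 1) j))

/-- An element of `𝒯ₙ`: a triangular array together with an admissible set of
special entries. -/
def IsTArr (n : ℕ) (a : ℕ → ℕ → ℤ) (S : Finset (ℕ × ℕ)) : Prop :=
  IsTri n a ∧ SpecOK n a S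

/-- The positions of inversions of an element of `𝒯ₙ`: entries that are not
parents of special entries and whose two lower neighbours strictly decrease. -/
def invF (n : ℕ) (a : ℕ → ℕ → ℤ) (S : Finset (ℕ × ℕ)) : Finset (ℕ × ℕ) :=
  ((Finset.range (n + 1)) ×ˢ (Finset.range (n + 1))).filter (fun p =>
    1 ≤ p.2 ∧ p.2 ≤ p.1 ∧ p.1 + 1 ≤ n ∧
    (p.1 + 1, p.2) ∉ S ∧ (p.1 + 1, p.2 + 1) ∉ S ∧
    a (p.1 + 1) (p.2 + 1) < a (p.1 + 1) p.2)

/-- `s(A)`: the total number of special entries and inversions. -/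
def sT (n : ℕ) (a : ℕ → ℕ → ℤ) (S : Finset (ℕ × ℕ)) : ℕ :=
  S.card + (invF n a S).card

/-- The set `𝒯ₙ(k)` of triangular arrays with special entries and bottom row `k`. -/
def TSet (n : ℕ) (k : Fin n → ℤ) : Set ((ℕ → ℕ → ℤ) × Finset (ℕ × ℕ)) :=
  {A | IsTArr n A.1 A.2 ∧ BottomRow n A.1 k}

/-- The condition `a_{i,j-1} ≤ a_{i,j} ≤ a_{i,j+1} → a_{i-1,j-1} < a_{i-1,j}`. -/
def StrictCond (n : ℕ) (a : ℕ → ℕ → ℤ) : Prop :=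
  ∀ i j, 2 ≤ j → j + 1 ≤ i → i ≤ n →
    a i (j - 1) ≤ a i j → a i j ≤ a i (j + 1) → a (i - 1) (j - 1) < a (i - 1) j

/-!
Deleting the bottom row of an array expresses the signed sum over `k` through the signed sums over
the rows `l` above `k`. Suppose that `l` violates the strictness condition for
`k_j ≤ k_{j+1} ≤ k_{j+2}`. Unless `l` has three equal consecutive entries, this forces
`l_j = l_{j+1} = k_{j+1}`, and toggling whether `k_{j+1}` is special reverses the sign and keeps the
array admissible. Above three equal consecutive entries no row is strict, so the signed sum over
such an `l` vanishes. Hence the strictness condition may be dropped one row at a time.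

Without it, each entry of `l` is summed, with sign, over a range depending on its two lower
neighbours `a`, `b`, and a signed sum over this range telescopes to `F (b + 1) - F a` in both cases
`a ≤ b` and `b < a`. So the signed sum is a polynomial in `k`. On strictly increasing `k` the
strictness condition makes all rows strictly increasing, which leaves the Monotone Triangles, each
with sign `+1`, and a polynomial is determined by its values on strictly increasing sequences.
-/

/-! ### Polynomial functions -/

section PolynomialFunctions

variable {R σ : Type*} [CommRing R]

variable (R σ) in
/-- The polynomial functions of integer variables indexed by `σ`, with coefficients in `R`. -/
noncomputable def polyFun : Subalgebra R ((σ → ℤ) → R) :=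
  (MvPolynomial.aeval fun i k => (k i : R)).range

theorem mem_polyFun {f : (σ → ℤ) → R} :
    f ∈ polyFun R σ ↔
      ∃ P : MvPolynomial σ R, ∀ k : σ → ℤ, f k = MvPolynomial.eval (fun i => (k i : R)) P := by
  have eval_aeval (P : MvPolynomial σ R) (k : σ → ℤ) :
      MvPolynomial.aeval (fun i (k : σ → ℤ) => (k i : R)) P k =
        MvPolynomial.eval (fun i => (k i : R)) P := by
    induction P using MvPolynomial.induction_on <;> simp_all
  simp only [polyFun, AlgHom.mem_range, funext_iff, eval_aeval, eq_comm]

theorem polynomial_eval_mem_polyFun (p : Polynomial R) (i : σ) :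
    (fun k => p.eval (k i : R)) ∈ polyFun R σ :=
  mem_polyFun.2 ⟨Polynomial.aeval (MvPolynomial.X i) p, fun k => by
    rw [Polynomial.aeval_def, Polynomial.hom_eval₂]
    simp [MvPolynomial.algebraMap_eq, Polynomial.eval₂_eq_eval_map]⟩

theorem mvPolynomial_eq_of_eval_eq_of_strictMono [IsDomain R] [CharZero R] {n : ℕ}
    {P Q : MvPolynomial (Fin n) R}
    (h : ∀ k : Fin n → ℤ, StrictMono k →
      MvPolynomial.eval (fun i => (k i : R)) P = MvPolynomial.eval (fun i => (k i : R)) Q) :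
    P = Q := by
  classical
  -- A point with `i`-th coordinate in the `i`-th block is strictly increasing, so `P - Q` vanishes
  -- on a grid with more than `degreeOf i` points in direction `i`.
  let D : ℕ := (P - Q).totalDegree + 1
  let block (i : Fin n) : Finset ℤ := Finset.Ico (i * D) ((i + 1) * D)
  have card_block (i : Fin n) : ((block i).image (Int.cast : ℤ → R)).card = D := by
    rw [Finset.card_image_of_injective _ Int.cast_injective, Int.card_Ico]
    grind
  refine sub_eq_zero.1 <| MvPolynomial.eq_zero_of_eval_zero_at_prod_finset _
    (fun i => (block i).image Int.cast) (fun i => ?_) fun x hx => ?_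
  · rw [card_block]
    exact Nat.lt_succ_of_le (MvPolynomial.degreeOf_le_totalDegree _ i)
  · simp only [Finset.mem_image] at hx
    choose k hk hkx using hx
    have hmono : StrictMono k := fun i j hij => by
      have hi := (Finset.mem_Ico.1 (hk i)).2
      have hj := (Finset.mem_Ico.1 (hk j)).1
      have : ((i : ℤ) + 1) * D ≤ j * D := by gcongr; exact_mod_cast hij
      linarith
    obtain rfl : (fun i => (k i : R)) = x := funext hkx
    rw [map_sub, h k hmono, sub_self]

end PolynomialFunctions

theorem exists_polynomial_antidifference (e : ℕ) :
    ∃ p : Polynomial ℚ, ∀ x : ℚ, p.eval (x + 1) - p.eval x = x ^ e := by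
  refine ⟨Polynomial.C ((e + 1 : ℚ)⁻¹) * Polynomial.bernoulli (e + 1), fun x => ?_⟩
  have h : (e + 1 : ℚ) ≠ 0 := by positivity
  simp only [add_comm x 1, Polynomial.eval_mul, Polynomial.eval_C,
    Polynomial.bernoulli_eval_one_add]
  push_cast
  field_simp
  simp

theorem sum_Ico_int_eq_sub {G : Type*} [AddCommGroup G] {f F : ℤ → G}
    (hF : ∀ x, F (x + 1) - F x = f x) {a b : ℤ} (hab : a ≤ b) :
    ∑ x ∈ Finset.Ico a b, f x = F b - F a := by
  induction b, hab using Int.leInduction with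
  | base => simp
  | succ b hb ih =>
    rw [← Finset.insert_Ico_right_eq_Ico_add_one hb, Finset.sum_insert (by simp), ih, ← hF,
      sub_add_sub_cancel]

/-- The values allowed for an entry whose lower neighbours `a` and `b` are not special: weakly
between them if `a ≤ b`, strictly between them if `b < a`. -/
noncomputable def entryRange (a b : ℤ) : Finset ℤ :=
  if a ≤ b then Finset.Icc a b else Finset.Ioo b a

theorem mem_entryRange {a b x : ℤ} :
    x ∈ entryRange a b ↔ (a ≤ b → a ≤ x ∧ x ≤ b) ∧ (b < a → b < x ∧ x < a) := by
  grind [entryRange]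

theorem signed_sum_entryRange {R : Type*} [Ring R] {f F : ℤ → R}
    (hF : ∀ x, F (x + 1) - F x = f x) (a b : ℤ) :
    (if b < a then -1 else 1) * ∑ x ∈ entryRange a b, f x = F (b + 1) - F a := by
  rcases le_or_gt a b with h | h
  · have : entryRange a b = Finset.Ico a (b + 1) := by ext; grind [entryRange]
    simp [this, sum_Ico_int_eq_sub hF (show a ≤ b + 1 by lia), h.not_gt]
  · have : entryRange a b = Finset.Ico (b + 1) a := by ext; grind [entryRange]
    simp [this, sum_Ico_int_eq_sub hF (show b + 1 ≤ a by lia), h]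

open scoped symmDiff in
theorem neg_one_pow_card_symmDiff_singleton {α R : Type*} [DecidableEq α] [Ring R] (s : Finset α)
    (a : α) : (-1 : R) ^ (s ∆ {a}).card = -(-1) ^ s.card := by
  by_cases ha : a ∈ s
  · have : s ∆ {a} = s.erase a := by ext; grind [Finset.mem_symmDiff]
    rw [this, ← Finset.card_erase_add_one ha, pow_succ]
    simp
  · have : s ∆ {a} = insert a s := by ext; grind [Finset.mem_symmDiff]
    rw [this, Finset.card_insert_of_notMem ha, pow_succ]
    simp

/-! ### Rows above a given row -/

/-- A tuple as a row of a triangular array: entries indexed from `1`, and `0` outside `1, …, n`. -/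
def rowOf {n : ℕ} (k : Fin n → ℤ) (j : ℕ) : ℤ :=
  if h : 1 ≤ j ∧ j ≤ n then k ⟨j - 1, by lia⟩ else 0

theorem rowOf_val_add_one {n : ℕ} (k : Fin n → ℤ) (j : Fin n) : rowOf k (j + 1) = k j := by
  simp [rowOf]

theorem rowOf_of_notMem {n : ℕ} (k : Fin n → ℤ) {j : ℕ} (hj : j ∉ Finset.Icc 1 n) :
    rowOf k j = 0 := by
  grind [rowOf]

theorem forall_mem_Icc_one_iff {n : ℕ} {p : ℕ → Prop} :
    (∀ j ∈ Finset.Icc 1 n, p j) ↔ ∀ j : Fin n, p (j + 1) := by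
  refine ⟨fun h j => h _ (by grind), fun h j hj => ?_⟩
  rw [Finset.mem_Icc] at hj
  simpa [Nat.sub_add_cancel hj.1] using h ⟨j - 1, by lia⟩

theorem rowOf_eq_iff {n : ℕ} {k : Fin n → ℤ} {r : ℕ → ℤ} (hr : ∀ j ∉ Finset.Icc 1 n, r j = 0) :
    r = rowOf k ↔ ∀ j : Fin n, r (j + 1) = k j := by
  refine ⟨fun h j => h ▸ rowOf_val_add_one k j, fun h => funext fun j => ?_⟩
  by_cases hj : j ∈ Finset.Icc 1 n
  · exact forall_mem_Icc_one_iff (p := fun j => r j = rowOf k j) |>.2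
      (fun j => (h j).trans (rowOf_val_add_one k j).symm) j hj
  · rw [hr j hj, rowOf_of_notMem k hj]

/-- `l` is an admissible row of length `n` above the row `k` of length `n + 1` whose special entries
are those with index in `s`. These are the conditions of `SpecOK` on two consecutive rows. -/
structure IsRowAbove (n : ℕ) (k : ℕ → ℤ) (s : Finset ℕ) (l : ℕ → ℤ) : Prop where
  subset_Icc : s ⊆ Finset.Icc 2 n
  succ_notMem : ∀ j ∈ s, j + 1 ∉ s
  parents_eq : ∀ j, j + 1 ∈ s → l j = k (j + 1) ∧ l (j + 1) = k (j + 1)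
  entry_mem : ∀ j ∈ Finset.Icc 1 n, j ∉ s → j + 1 ∉ s → l j ∈ entryRange (k j) (k (j + 1))

/-- The condition of `StrictCond` on the row `l` of length `n` above the row `k`: three weakly
increasing consecutive entries of `k` force a strict increase above. The index `j` of `StrictCond`
is `j + 1` here. -/
def IsStrictAbove (n : ℕ) (k l : ℕ → ℤ) : Prop :=
  ∀ j, 1 ≤ j → j + 1 ≤ n → k j ≤ k (j + 1) → k (j + 1) ≤ k (j + 2) → l j < l (j + 1)

/-- The row `l` of length `n` has three equal consecutive entries. -/
def HasTriple (n : ℕ) (l : ℕ → ℤ) : Prop :=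
  ∃ j, 1 ≤ j ∧ j + 2 ≤ n ∧ l j = l (j + 1) ∧ l (j + 1) = l (j + 2)

/-- The indices of the inversions in the row of length `n` above `k`, given the special set `s` of
`k`. -/
def rowInversions (n : ℕ) (k : ℕ → ℤ) (s : Finset ℕ) : Finset ℕ :=
  {j ∈ Finset.Icc 1 n | j ∉ s ∧ j + 1 ∉ s ∧ k (j + 1) < k j}

/-- The contribution to `(-1) ^ s(A)` of the special entries `s` of the row `k` and of the
inversions in the row of length `n` above it. -/
def rowSign (n : ℕ) (k : ℕ → ℤ) (s : Finset ℕ) : ℚ :=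
  (-1) ^ (s.card + (rowInversions n k s).card)

/-- The admissible sets of indices of special entries in a row of length `n + 1`. -/
def specialSets (n : ℕ) : Finset (Finset ℕ) :=
  {s ∈ (Finset.Icc 2 n).powerset | ∀ j ∈ s, j + 1 ∉ s}

/-- The values allowed at index `j` of a row above `k`, given the special set `s` of `k`. -/
noncomputable def allowedEntries (k : ℕ → ℤ) (s : Finset ℕ) (j : ℕ) : Finset ℤ :=
  if j ∈ s then {k j} else if j + 1 ∈ s then {k (j + 1)} else entryRange (k j) (k (j + 1))

/-- The tuples that are admissible rows above `k`, given the special set `s` of `k`. -/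
noncomputable def rowsAbove (n : ℕ) (k : ℕ → ℤ) (s : Finset ℕ) : Finset (Fin n → ℤ) :=
  Fintype.piFinset fun j => allowedEntries k s (j + 1)

/-- The sum of `A` over the rows above `k`, signed by the choice of the special entries of `k`. -/
noncomputable def rowSum (n : ℕ) (k : ℕ → ℤ) (A : (Fin n → ℤ) → ℚ) : ℚ :=
  ∑ s ∈ specialSets n, rowSign n k s * ∑ l ∈ rowsAbove n k s, A l

theorem mem_specialSets_and_mem_rowsAbove_iff {n : ℕ} {k : ℕ → ℤ} {s : Finset ℕ}
    {l : Fin n → ℤ} :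
    s ∈ specialSets n ∧ l ∈ rowsAbove n k s ↔ IsRowAbove n k s (rowOf l) := by
  have mem_rowsAbove : l ∈ rowsAbove n k s ↔
      ∀ j ∈ Finset.Icc 1 n, rowOf l j ∈ allowedEntries k s j := by
    simp only [forall_mem_Icc_one_iff (p := fun j => rowOf l j ∈ allowedEntries k s j), rowsAbove,
      Fintype.mem_piFinset, rowOf_val_add_one]
  simp only [mem_rowsAbove, specialSets, Finset.mem_filter, Finset.mem_powerset, allowedEntries]
  refine ⟨fun ⟨⟨hs, hadj⟩, hl⟩ => ⟨hs, hadj, fun j hj => ⟨?_, ?_⟩, ?_⟩,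
    fun ⟨hs, hadj, hpar, hmem⟩ => ⟨⟨hs, hadj⟩, fun j hj => ?_⟩⟩
  · have := hs hj
    have := hl j
    grind
  · have := hs hj
    have := hl (j + 1)
    grind
  · grind
  · obtain ⟨i, rfl⟩ : ∃ i, j = i + 1 := ⟨j - 1, by grind⟩
    grind

/-! ### Cancellation of the rows that are not strict -/

open scoped symmDiff in
theorem IsRowAbove.symmDiff_singleton {n : ℕ} {k : ℕ → ℤ} {s : Finset ℕ} {l : ℕ → ℤ}
    (h : IsRowAbove n k s l) (hl : ¬ HasTriple n l) {j : ℕ} (hj : 1 ≤ j) (hjn : j + 1 ≤ n)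
    (hk₁ : k j ≤ k (j + 1)) (hk₂ : k (j + 1) ≤ k (j + 2)) (hlj : l (j + 1) ≤ l j) :
    IsRowAbove n k (s ∆ {j + 1}) l := by
  obtain ⟨hs, hadj, hpar, hmem⟩ := h
  simp only [mem_entryRange] at hmem
  have left_notMem : j ∉ s := fun hjs => by
    obtain ⟨i, rfl⟩ : ∃ i, j = i + 1 := ⟨j - 1, by lia⟩
    have le_entry : k (i + 2) ≤ l (i + 2) := by
      by_cases hi : i + 3 ∈ s <;> grind
    exact hl ⟨i, by grind⟩
  have right_notMem : j + 2 ∉ s := fun hjs => hl ⟨j, by grind⟩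
  have parents_eq : l j = k (j + 1) ∧ l (j + 1) = k (j + 1) := by grind
  refine ⟨?_, ?_, ?_, ?_⟩
  · grind [Finset.mem_symmDiff]
  · grind [Finset.mem_symmDiff]
  · grind [Finset.mem_symmDiff]
  · simp only [mem_entryRange]
    grind [Finset.mem_symmDiff]

open scoped symmDiff in
theorem rowSign_symmDiff_singleton {n : ℕ} {k : ℕ → ℤ} {j : ℕ} (s : Finset ℕ)
    (hk₁ : k j ≤ k (j + 1)) (hk₂ : k (j + 1) ≤ k (j + 2)) :
    rowSign n k (s ∆ {j + 1}) = -rowSign n k s := by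
  have : rowInversions n k (s ∆ {j + 1}) = rowInversions n k s := by
    ext i
    simp only [rowInversions, Finset.mem_filter, Finset.mem_symmDiff, Finset.mem_singleton]
    grind
  rw [rowSign, rowSign, this, pow_add, neg_one_pow_card_symmDiff_singleton, pow_add, neg_mul]

open scoped Classical symmDiff in
theorem sum_rowSign_eq_zero {n : ℕ} {k l : ℕ → ℤ} (hstrict : ¬ IsStrictAbove n k l)
    (hl : ¬ HasTriple n l) :
    ∑ s ∈ specialSets n with IsRowAbove n k s l, rowSign n k s = 0 := by
  obtain ⟨j, hj, hjn, hk₁, hk₂, hlj⟩ : ∃ j, 1 ≤ j ∧ j + 1 ≤ n ∧ k j ≤ k (j + 1) ∧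
      k (j + 1) ≤ k (j + 2) ∧ l (j + 1) ≤ l j := by
    simpa only [IsStrictAbove, not_forall, not_lt, exists_prop] using hstrict
  refine Finset.sum_involution (fun s _ => s ∆ {j + 1}) (fun s _ => ?_) (fun s _ _ h => ?_)
    (fun s hs => ?_) (fun s _ => symmDiff_symmDiff_cancel_right _ s)
  · rw [rowSign_symmDiff_singleton s hk₁ hk₂, add_neg_cancel]
  · simp at h
  · have h := (Finset.mem_filter.1 hs).2.symmDiff_singleton hl hj hjn hk₁ hk₂ hlj
    refine Finset.mem_filter.2 ⟨?_, h⟩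
    exact Finset.mem_filter.2 ⟨Finset.mem_powerset.2 h.subset_Icc, h.succ_notMem⟩

open Classical in
theorem rowSum_eq_sum_biUnion {n : ℕ} (k : ℕ → ℤ) (A : (Fin n → ℤ) → ℚ) :
    rowSum n k A = ∑ l ∈ (specialSets n).biUnion (rowsAbove n k),
      (∑ s ∈ specialSets n with IsRowAbove n k s (rowOf l), rowSign n k s) * A l := by
  simp only [rowSum, Finset.mul_sum, Finset.sum_mul]
  refine Finset.sum_comm' fun s l => ?_
  simp only [Finset.mem_biUnion, Finset.mem_filter, ← mem_specialSets_and_mem_rowsAbove_iff]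
  grind

theorem rowSum_indicator_isStrictAbove {n : ℕ} (k : ℕ → ℤ) {A : (Fin n → ℤ) → ℚ}
    (hA : ∀ l, HasTriple n (rowOf l) → A l = 0) :
    rowSum n k ({l | IsStrictAbove n k (rowOf l)}.indicator A) = rowSum n k A := by
  classical
  rw [rowSum_eq_sum_biUnion, rowSum_eq_sum_biUnion]
  refine Finset.sum_congr rfl fun l _ => ?_
  by_cases hstrict : IsStrictAbove n k (rowOf l)
  · rw [Set.indicator_of_mem hstrict]
  by_cases hl : HasTriple n (rowOf l)
  · rw [Set.indicator_of_notMem hstrict, hA l hl]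
  · rw [sum_rowSign_eq_zero hstrict hl, zero_mul, zero_mul]

theorem IsRowAbove.not_isStrictAbove {n : ℕ} {k l : ℕ → ℤ} {s : Finset ℕ}
    (h : IsRowAbove n k s l) (hk : HasTriple (n + 1) k) : ¬ IsStrictAbove n k l := by
  obtain ⟨j, hj, hjn, hk₁, hk₂⟩ := hk
  obtain ⟨i, rfl⟩ : ∃ i, j = i + 1 := ⟨j - 1, by lia⟩
  obtain ⟨-, -, hpar, hmem⟩ := h
  simp only [mem_entryRange] at hmem
  have entry_eq : l (i + 1) = k (i + 2) ∧ l (i + 2) = k (i + 2) := by grind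
  intro hstrict
  have := hstrict (i + 1) hj (by lia) hk₁.le hk₂.le
  lia

theorem rowSum_indicator_isStrictAbove_eq_zero {n : ℕ} {k : ℕ → ℤ} (A : (Fin n → ℤ) → ℚ)
    (hk : HasTriple (n + 1) k) :
    rowSum n k ({l | IsStrictAbove n k (rowOf l)}.indicator A) = 0 := by
  refine Finset.sum_eq_zero fun s hs => ?_
  rw [Finset.sum_eq_zero fun l hl => ?_, mul_zero]
  exact Set.indicator_of_notMem
    ((mem_specialSets_and_mem_rowsAbove_iff.1 ⟨hs, hl⟩).not_isStrictAbove hk) _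

/-- The signed sum over all of `𝒯ₙ(k)`, without the strictness condition, organised row by row from
the bottom. -/
noncomputable def iteratedRowSum : (n : ℕ) → (Fin n → ℤ) → ℚ
  | 0, _ => 1
  | n + 1, k => rowSum n (rowOf k) (iteratedRowSum n)

theorem iteratedRowSum_eq_zero_of_hasTriple {n : ℕ} {k : Fin n → ℤ}
    (hk : HasTriple n (rowOf k)) : iteratedRowSum n k = 0 := by
  induction n with
  | zero =>
    obtain ⟨j, -, hj, -⟩ := hk
    lia
  | succ n ih =>
    rw [iteratedRowSum, ← rowSum_indicator_isStrictAbove _ fun l => ih]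
    exact rowSum_indicator_isStrictAbove_eq_zero _ hk

/-! ### Polynomiality of the iterated row sum -/

theorem neg_one_pow_card_eq_prod {R : Type*} [CommRing R] {n : ℕ} {t : Finset ℕ}
    (ht : t ⊆ Finset.Icc 1 n) :
    (-1 : R) ^ t.card = ∏ j : Fin n, if (j : ℕ) + 1 ∈ t then -1 else 1 := by
  rw [Fin.prod_univ_eq_prod_range (fun j => if j + 1 ∈ t then (-1 : R) else 1) n,
    Finset.range_eq_Ico, Finset.prod_Ico_add' (fun j => if j ∈ t then (-1 : R) else 1) 0 n 1,
    Finset.prod_ite_mem, Finset.Ico_add_one_right_eq_Icc, Finset.inter_eq_right.2 ht,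
    Finset.prod_const]

theorem rowSum_eval {n : ℕ} (k : ℕ → ℤ) (P : MvPolynomial (Fin n) ℚ) :
    rowSum n k (fun l => MvPolynomial.eval (fun j => (l j : ℚ)) P) =
      ∑ s ∈ specialSets n, (-1) ^ s.card * ∑ d ∈ P.support, P.coeff d *
        ∏ j : Fin n, ((if (j : ℕ) + 1 ∈ rowInversions n k s then -1 else 1) *
          ∑ x ∈ allowedEntries k s (j + 1), (x : ℚ) ^ d j) := by
  refine Finset.sum_congr rfl fun s _ => ?_
  rw [rowSign, pow_add, mul_assoc,
    neg_one_pow_card_eq_prod (t := rowInversions n k s) (Finset.filter_subset _ _)]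
  simp only [MvPolynomial.eval_eq', rowsAbove, Finset.prod_mul_distrib, Finset.prod_univ_sum]
  rw [Finset.sum_comm, Finset.mul_sum]
  congr! 2 with d
  rw [← Finset.mul_sum, mul_left_comm]

theorem signed_sum_allowedEntries_mem_polyFun {n : ℕ} (s : Finset ℕ) (j : Fin n) (e : ℕ) :
    (fun k : Fin (n + 1) → ℤ =>
      (if (j : ℕ) + 1 ∈ rowInversions n (rowOf k) s then -1 else 1) *
        ∑ x ∈ allowedEntries (rowOf k) s (j + 1), (x : ℚ) ^ e) ∈ polyFun ℚ (Fin (n + 1)) := by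
  have rowOf_left (k : Fin (n + 1) → ℤ) : rowOf k (j + 1) = k j.castSucc :=
    rowOf_val_add_one k j.castSucc
  have rowOf_right (k : Fin (n + 1) → ℤ) : rowOf k (j + 1 + 1) = k j.succ :=
    rowOf_val_add_one k j.succ
  by_cases hleft : (j : ℕ) + 1 ∈ s
  · simpa [allowedEntries, rowInversions, hleft, rowOf_left] using
      polynomial_eval_mem_polyFun (Polynomial.X ^ e : Polynomial ℚ) j.castSucc
  by_cases hright : (j : ℕ) + 1 + 1 ∈ s
  · simpa [allowedEntries, rowInversions, hleft, hright, rowOf_right] using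
      polynomial_eval_mem_polyFun (Polynomial.X ^ e : Polynomial ℚ) j.succ
  obtain ⟨p, hp⟩ := exists_polynomial_antidifference e
  have telescope (k : Fin (n + 1) → ℤ) := signed_sum_entryRange
    (f := fun x : ℤ => (x : ℚ) ^ e) (F := fun x : ℤ => p.eval (x : ℚ))
    (fun x => by simpa using hp x) (k j.castSucc) (k j.succ)
  convert sub_mem (polynomial_eval_mem_polyFun (p.comp (Polynomial.X + 1)) j.succ)
      (polynomial_eval_mem_polyFun p j.castSucc) using 1
  ext k
  simpa [allowedEntries, rowInversions, hleft, hright, rowOf_left, rowOf_right] using telescope k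

theorem rowSum_mem_polyFun {n : ℕ} {A : (Fin n → ℤ) → ℚ} (hA : A ∈ polyFun ℚ (Fin n)) :
    (fun k : Fin (n + 1) → ℤ => rowSum n (rowOf k) A) ∈ polyFun ℚ (Fin (n + 1)) := by
  obtain ⟨P, hP⟩ := mem_polyFun.1 hA
  obtain rfl := funext hP
  have expansion : (fun k : Fin (n + 1) → ℤ =>
      rowSum n (rowOf k) fun l => MvPolynomial.eval (fun i => (l i : ℚ)) P) =
      ∑ s ∈ specialSets n, (-1 : ℚ) ^ s.card • ∑ d ∈ P.support, P.coeff d • ∏ j : Fin n,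
        fun k : Fin (n + 1) → ℤ => (if (j : ℕ) + 1 ∈ rowInversions n (rowOf k) s then -1 else 1) *
          ∑ x ∈ allowedEntries (rowOf k) s (j + 1), (x : ℚ) ^ d j := by
    ext k
    simp [rowSum_eval]
  rw [expansion]
  refine sum_mem fun s _ => Subalgebra.smul_mem _ (sum_mem fun d _ => Subalgebra.smul_mem _ ?_ _) _
  exact prod_mem fun j _ => signed_sum_allowedEntries_mem_polyFun s j (d j)

theorem iteratedRowSum_mem_polyFun (n : ℕ) : iteratedRowSum n ∈ polyFun ℚ (Fin n) := by
  induction n with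
  | zero => exact one_mem _
  | succ n ih => exact rowSum_mem_polyFun ih

/-! ### Marked arrays row by row -/

/-- An array of integers together with a finite set of (special) positions. -/
abbrev MarkedArray := (ℕ → ℕ → ℤ) × Finset (ℕ × ℕ)

/-- The elements of `𝒯ₙ(k)` over which the signed sum of the theorem runs. -/
def strictTSet (n : ℕ) (k : Fin n → ℤ) : Set MarkedArray :=
  {A ∈ TSet n k | StrictCond n A.1}

/-- The column indices of the positions of `S` in row `i`. -/
noncomputable def rowSlice (S : Finset (ℕ × ℕ)) (i : ℕ) : Finset ℕ :=
  S.preimage (Prod.mk i) (Prod.mk_right_injective i).injOn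

theorem mem_rowSlice {S : Finset (ℕ × ℕ)} {i j : ℕ} : j ∈ rowSlice S i ↔ (i, j) ∈ S :=
  Finset.mem_preimage

theorem card_eq_sum_card_rowSlice {S : Finset (ℕ × ℕ)} {t : Finset ℕ} (h : ∀ p ∈ S, p.1 ∈ t) :
    S.card = ∑ i ∈ t, (rowSlice S i).card := by
  rw [Finset.card_eq_sum_card_fiberwise h]
  refine Finset.sum_congr rfl fun i _ => ?_
  rw [← Finset.card_image_of_injective (rowSlice S i) (Prod.mk_right_injective i)]
  congr 1
  ext ⟨i', j⟩
  simp only [Finset.mem_filter, Finset.mem_image, mem_rowSlice, Prod.mk.injEq]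
  grind

theorem specOK_iff {n : ℕ} {a : ℕ → ℕ → ℤ} {S : Finset (ℕ × ℕ)} :
    SpecOK n a S ↔ (∀ p ∈ S, p.1 ∈ Finset.Icc 1 n) ∧
      ∀ m < n, IsRowAbove m (a (m + 1)) (rowSlice S (m + 1)) (a m) := by
  constructor
  · rintro ⟨hpos, hadj, hpar, hentry⟩
    refine ⟨fun p hp => ?_, fun m hm => ⟨fun j hj => ?_, fun j hj hj' => ?_, fun j hj => ?_,
      fun j hj hleft hright => ?_⟩⟩
    · grind
    · have := hpos _ (mem_rowSlice.1 hj)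
      grind
    · exact hadj _ (mem_rowSlice.1 hj) _ (mem_rowSlice.1 hj') rfl rfl
    · exact hpar _ (mem_rowSlice.1 hj)
    · rw [Finset.mem_Icc] at hj
      rw [mem_rowSlice] at hleft hright
      exact mem_entryRange.2 (hentry m j hj.1 hj.2 hm hleft hright)
  · rintro ⟨hrow, habove⟩
    have hslice {p : ℕ × ℕ} (hp : p ∈ S) : ∃ m j, p = (m + 1, j + 1) ∧ j + 1 ∈ Finset.Icc 2 m ∧
        m < n ∧ j + 1 ∈ rowSlice S (m + 1) := by
      obtain ⟨i, j⟩ := p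
      have hi := Finset.mem_Icc.1 (hrow _ hp)
      obtain ⟨m, rfl⟩ : ∃ m, i = m + 1 := ⟨i - 1, by lia⟩
      have hj := (habove m hi.2).subset_Icc (mem_rowSlice.2 hp)
      obtain ⟨j, rfl⟩ : ∃ j', j = j' + 1 := ⟨j - 1, by grind⟩
      exact ⟨m, j, rfl, hj, hi.2, mem_rowSlice.2 hp⟩
    refine ⟨fun p hp => ?_, fun p hp q hq hpq hq' => ?_, fun p hp => ?_,
      fun m j hj hjm hm hleft hright => ?_⟩
    · obtain ⟨m, j, rfl, hj, hm, -⟩ := hslice hp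
      grind
    · obtain ⟨m, j, rfl, -, hm, hj⟩ := hslice hp
      obtain ⟨i', j'⟩ := q
      obtain rfl : m + 1 = i' := hpq
      obtain rfl : j' = j + 1 + 1 := hq'
      exact (habove m hm).succ_notMem _ hj (mem_rowSlice.2 hq)
    · obtain ⟨m, j, rfl, -, hm, hj⟩ := hslice hp
      exact (habove m hm).parents_eq j hj
    · exact mem_entryRange.1 <| (habove m hm).entry_mem j (Finset.mem_Icc.2 ⟨hj, hjm⟩)
        (mt mem_rowSlice.1 hleft) (mt mem_rowSlice.1 hright)

theorem strictCond_iff {n : ℕ} {a : ℕ → ℕ → ℤ} :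
    StrictCond n a ↔ ∀ m < n, IsStrictAbove m (a (m + 1)) (a m) := by
  refine ⟨fun h m hm j hj hjm => h (m + 1) (j + 1) (by lia) (by lia) hm, fun h i j hj hji hin => ?_⟩
  obtain ⟨m, rfl⟩ : ∃ m, i = m + 1 := ⟨i - 1, by lia⟩
  obtain ⟨j, rfl⟩ : ∃ j', j = j' + 1 := ⟨j - 1, by lia⟩
  exact h m hin j (by lia) (by lia)

theorem IsTri.bottomRow_iff {n : ℕ} {a : ℕ → ℕ → ℤ} (h : IsTri n a) {k : Fin n → ℤ} :
    BottomRow n a k ↔ a n = rowOf k :=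
  (rowOf_eq_iff fun j hj => h n j (by grind)).symm

theorem mem_strictTSet_iff {n : ℕ} {k : Fin n → ℤ} {A : MarkedArray} :
    A ∈ strictTSet n k ↔ IsTri n A.1 ∧ (∀ p ∈ A.2, p.1 ∈ Finset.Icc 1 n) ∧ A.1 n = rowOf k ∧
      ∀ m < n, IsRowAbove m (A.1 (m + 1)) (rowSlice A.2 (m + 1)) (A.1 m) ∧
        IsStrictAbove m (A.1 (m + 1)) (A.1 m) := by
  change ((IsTri n A.1 ∧ SpecOK n A.1 A.2) ∧ BottomRow n A.1 k) ∧ StrictCond n A.1 ↔ _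
  rw [specOK_iff, strictCond_iff]
  constructor
  · rintro ⟨⟨⟨htri, hrow, habove⟩, hbot⟩, hstrict⟩
    exact ⟨htri, hrow, htri.bottomRow_iff.1 hbot, fun m hm => ⟨habove m hm, hstrict m hm⟩⟩
  · rintro ⟨htri, hrow, hbot, habove⟩
    exact ⟨⟨⟨htri, hrow, fun m hm => (habove m hm).1⟩, htri.bottomRow_iff.2 hbot⟩,
      fun m hm => (habove m hm).2⟩

theorem neg_one_pow_sT {n : ℕ} {a : ℕ → ℕ → ℤ} {S : Finset (ℕ × ℕ)}
    (hS : ∀ p ∈ S, p.1 ∈ Finset.Icc 1 n) :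
    (-1) ^ sT n a S = ∏ m ∈ Finset.range n, rowSign m (a (m + 1)) (rowSlice S (m + 1)) := by
  have rowSlice_invF {m : ℕ} (hm : m ∈ Finset.range n) :
      rowSlice (invF n a S) m = rowInversions m (a (m + 1)) (rowSlice S (m + 1)) := by
    ext j
    simp only [mem_rowSlice, invF, rowInversions, Finset.mem_filter, Finset.mem_product]
    grind
  have card_S : S.card = ∑ m ∈ Finset.range n, (rowSlice S (m + 1)).card := by
    rw [card_eq_sum_card_rowSlice hS, Finset.range_eq_Ico,
      Finset.sum_Ico_add' (fun m => (rowSlice S m).card), zero_add,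
      Finset.Ico_add_one_right_eq_Icc]
  have card_invF : (invF n a S).card = ∑ m ∈ Finset.range n,
      (rowInversions m (a (m + 1)) (rowSlice S (m + 1))).card := by
    rw [card_eq_sum_card_rowSlice (t := Finset.range n) (by grind [invF])]
    exact Finset.sum_congr rfl fun m hm => by rw [rowSlice_invF hm]
  simp only [rowSign]
  rw [sT, card_S, card_invF, ← Finset.sum_add_distrib, Finset.prod_pow_eq_pow_sum]

/-- Replace row `i` of `A` by `r`, and its special entries by those with index in `s`. For
`i = n + 1` this appends a row to an array of size `n`; with `r = 0` and `s = ∅` it deletes the last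
row of an array of size `n + 1`. -/
def replaceRow (i : ℕ) (r : ℕ → ℤ) (s : Finset ℕ) (A : MarkedArray) : MarkedArray :=
  (Function.update A.1 i r, {p ∈ A.2 | p.1 ≠ i} ∪ s.image (Prod.mk i))

theorem rowSlice_replaceRow (i : ℕ) (r : ℕ → ℤ) (s : Finset ℕ) (A : MarkedArray) :
    rowSlice (replaceRow i r s A).2 = Function.update (rowSlice A.2) i s := by
  ext m j
  simp only [replaceRow, mem_rowSlice, Finset.mem_union, Finset.mem_filter, Finset.mem_image]
  grind [mem_rowSlice]

theorem MarkedArray.ext_rows {A B : MarkedArray} (hrow : A.1 = B.1)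
    (hslice : rowSlice A.2 = rowSlice B.2) : A = B :=
  Prod.ext hrow <| Finset.ext fun ⟨i, j⟩ => by rw [← mem_rowSlice, hslice, mem_rowSlice]

theorem replaceRow_replaceRow (i : ℕ) (r r' : ℕ → ℤ) (s s' : Finset ℕ) (A : MarkedArray) :
    replaceRow i r s (replaceRow i r' s' A) = replaceRow i r s A :=
  MarkedArray.ext_rows (Function.update_idem _ _ _) <| by
    simp only [rowSlice_replaceRow, Function.update_idem]

theorem replaceRow_eq_self {i : ℕ} {r : ℕ → ℤ} {s : Finset ℕ} {A : MarkedArray} (hr : A.1 i = r)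
    (hs : rowSlice A.2 i = s) : replaceRow i r s A = A :=
  MarkedArray.ext_rows (by rw [← hr]; exact Function.update_eq_self _ _) <| by
    rw [rowSlice_replaceRow, ← hs, Function.update_eq_self]

/-- Row `n` of the array `A`, as a tuple. -/
def rowTuple (n : ℕ) (A : MarkedArray) : Fin n → ℤ := fun j => A.1 n (j + 1)

theorem rowTuple_eq_of_mem_strictTSet {n : ℕ} {k : Fin n → ℤ} {A : MarkedArray}
    (hA : A ∈ strictTSet n k) : rowTuple n A = k :=
  funext hA.1.2

theorem rowTuple_replaceRow (n : ℕ) (r : ℕ → ℤ) (s : Finset ℕ) (A : MarkedArray) :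
    rowTuple n (replaceRow (n + 1) r s A) = rowTuple n A := by
  simp [funext_iff, rowTuple, replaceRow]

theorem IsTri.rowOf_rowTuple {m n : ℕ} {A : MarkedArray} (h : IsTri m A.1) :
    rowOf (rowTuple n A) = A.1 n :=
  ((rowOf_eq_iff fun j hj => h n j (by grind)).2 fun _ => rfl).symm

theorem replaceRow_mem_strictTSet {n : ℕ} {k : Fin (n + 1) → ℤ} {s : Finset ℕ} {l : Fin n → ℤ}
    (habove : IsRowAbove n (rowOf k) s (rowOf l)) (hstrict : IsStrictAbove n (rowOf k) (rowOf l))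
    {A : MarkedArray} (hA : A ∈ strictTSet n l) :
    replaceRow (n + 1) (rowOf k) s A ∈ strictTSet (n + 1) k := by
  obtain ⟨htri, hmarked, hbot, hrows⟩ := mem_strictTSet_iff.1 hA
  refine mem_strictTSet_iff.2 ⟨fun i j hij => ?_, by grind [replaceRow], by simp [replaceRow],
    fun m hm => ?_⟩
  · by_cases hi : i = n + 1
    · simpa [replaceRow, hi] using rowOf_of_notMem k (by grind)
    · simpa [replaceRow, hi] using htri i j (by lia)
  · rw [rowSlice_replaceRow]
    obtain rfl | hm := (Nat.lt_succ_iff.1 hm).eq_or_lt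
    · simpa [replaceRow, hbot] using ⟨habove, hstrict⟩
    · simpa [replaceRow, hm.ne, (hm.trans n.lt_succ_self).ne] using hrows m hm

theorem replaceRow_zero_mem_strictTSet {n : ℕ} {k : Fin (n + 1) → ℤ} {B : MarkedArray}
    (hB : B ∈ strictTSet (n + 1) k) :
    replaceRow (n + 1) 0 ∅ B ∈ strictTSet n (rowTuple n B) := by
  obtain ⟨htri, hmarked, -, hrows⟩ := mem_strictTSet_iff.1 hB
  refine mem_strictTSet_iff.2 ⟨fun i j hij => ?_, by grind [replaceRow], ?_, fun m hm => ?_⟩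
  · by_cases hi : i = n + 1
    · simp [replaceRow, hi]
    · simpa [replaceRow, hi] using htri i j (by lia)
  · simpa [replaceRow] using htri.rowOf_rowTuple.symm
  · rw [rowSlice_replaceRow]
    simpa [replaceRow, hm.ne, (hm.trans n.lt_succ_self).ne] using hrows m (by lia)

theorem isRowAbove_and_isStrictAbove_of_mem_strictTSet {n : ℕ} {k : Fin (n + 1) → ℤ}
    {B : MarkedArray} (hB : B ∈ strictTSet (n + 1) k) :
    IsRowAbove n (rowOf k) (rowSlice B.2 (n + 1)) (rowOf (rowTuple n B)) ∧
      IsStrictAbove n (rowOf k) (rowOf (rowTuple n B)) := by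
  obtain ⟨htri, -, hbot, hrows⟩ := mem_strictTSet_iff.1 hB
  rw [htri.rowOf_rowTuple, ← hbot]
  exact hrows n n.lt_succ_self

theorem replaceRow_replaceRow_zero {n : ℕ} {k : Fin (n + 1) → ℤ} {B : MarkedArray}
    (hB : B ∈ strictTSet (n + 1) k) :
    replaceRow (n + 1) (rowOf k) (rowSlice B.2 (n + 1)) (replaceRow (n + 1) 0 ∅ B) = B := by
  rw [replaceRow_replaceRow, replaceRow_eq_self (mem_strictTSet_iff.1 hB).2.2.1 rfl]

theorem replaceRow_zero_replaceRow {n : ℕ} {l : Fin n → ℤ} {A : MarkedArray}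
    (hA : A ∈ strictTSet n l) (r : ℕ → ℤ) (s : Finset ℕ) :
    replaceRow (n + 1) 0 ∅ (replaceRow (n + 1) r s A) = A := by
  obtain ⟨htri, hmarked, -⟩ := mem_strictTSet_iff.1 hA
  rw [replaceRow_replaceRow]
  refine replaceRow_eq_self (funext fun j => htri _ j (by lia)) ?_
  exact Finset.eq_empty_of_forall_notMem fun j hj => by grind [mem_rowSlice]

theorem neg_one_pow_sT_replaceRow {n : ℕ} {k : Fin (n + 1) → ℤ} {s : Finset ℕ} {l : Fin n → ℤ}
    (habove : IsRowAbove n (rowOf k) s (rowOf l)) (hstrict : IsStrictAbove n (rowOf k) (rowOf l))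
    {A : MarkedArray} (hA : A ∈ strictTSet n l) :
    (-1) ^ sT (n + 1) (replaceRow (n + 1) (rowOf k) s A).1 (replaceRow (n + 1) (rowOf k) s A).2 =
      rowSign n (rowOf k) s * (-1) ^ sT n A.1 A.2 := by
  have hB := replaceRow_mem_strictTSet habove hstrict hA
  rw [neg_one_pow_sT (mem_strictTSet_iff.1 hB).2.1, neg_one_pow_sT (mem_strictTSet_iff.1 hA).2.1,
    Finset.prod_range_succ, mul_comm, rowSlice_replaceRow]
  congr 1
  · simp [replaceRow]
  · refine Finset.prod_congr rfl fun m hm => ?_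
    have := (Finset.mem_range.1 hm).ne
    simp [replaceRow, this]

theorem strictTSet_zero (k : Fin 0 → ℤ) : strictTSet 0 k = {(0, ∅)} := by
  ext A
  rw [mem_strictTSet_iff, Set.mem_singleton_iff]
  constructor
  · rintro ⟨htri, hmarked, -⟩
    refine Prod.ext (funext₂ fun i j => htri i j (by lia)) ?_
    exact Finset.eq_empty_of_forall_notMem fun p hp => by grind
  · rintro rfl
    exact ⟨fun _ _ _ => rfl, by simp, funext fun j => (rowOf_of_notMem k (by simp)).symm, by simp⟩

theorem finite_strictTSet (n : ℕ) (k : Fin n → ℤ) : (strictTSet n k).Finite := by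
  induction n with
  | zero =>
    rw [strictTSet_zero]
    exact Set.finite_singleton _
  | succ n ih =>
    refine ((specialSets n).finite_toSet.biUnion fun s _ =>
      (rowsAbove n (rowOf k) s).finite_toSet.biUnion fun l _ =>
        (ih l).image (replaceRow (n + 1) (rowOf k) s)).subset fun B hB => ?_
    obtain ⟨hs, hl⟩ := mem_specialSets_and_mem_rowsAbove_iff.2
      (isRowAbove_and_isStrictAbove_of_mem_strictTSet hB).1
    simp only [Set.mem_iUnion]
    exact ⟨_, hs, _, hl, _, replaceRow_zero_mem_strictTSet hB, replaceRow_replaceRow_zero hB⟩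

theorem finsum_strictTSet_succ {n : ℕ} (k : Fin (n + 1) → ℤ) :
    ∑ᶠ B ∈ strictTSet (n + 1) k, (-1 : ℚ) ^ sT (n + 1) B.1 B.2 =
      rowSum n (rowOf k) ({l | IsStrictAbove n (rowOf k) (rowOf l)}.indicator fun l =>
        ∑ᶠ A ∈ strictTSet n l, (-1 : ℚ) ^ sT n A.1 A.2) := by
  classical
  simp only [rowSum, Set.indicator_apply, Set.mem_ofPred_eq, ← Finset.sum_filter,
    finsum_mem_eq_finite_toFinset_sum _ (finite_strictTSet _ _), Finset.mul_sum, Finset.sum_sigma']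
  have mem_index {p : (_ : Finset ℕ) × (_ : Fin n → ℤ) × MarkedArray} :
      (p ∈ (specialSets n).sigma fun s => {l ∈ rowsAbove n (rowOf k) s |
        IsStrictAbove n (rowOf k) (rowOf l)}.sigma fun l => (finite_strictTSet n l).toFinset) ↔
      IsRowAbove n (rowOf k) p.1 (rowOf p.2.1) ∧ IsStrictAbove n (rowOf k) (rowOf p.2.1) ∧
        p.2.2 ∈ strictTSet n p.2.1 := by
    simp [Finset.mem_sigma, ← mem_specialSets_and_mem_rowsAbove_iff, and_assoc]
  refine .symm <| Finset.sum_nbij' (fun p => replaceRow (n + 1) (rowOf k) p.1 p.2.2)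
    (fun B => ⟨rowSlice B.2 (n + 1), rowTuple n B, replaceRow (n + 1) 0 ∅ B⟩)
    (fun p hp => ?_) (fun B hB => ?_) (fun p hp => ?_) (fun B hB => ?_) (fun p hp => ?_)
  · obtain ⟨habove, hstrict, hA⟩ := mem_index.1 hp
    simpa only [Set.Finite.mem_toFinset] using replaceRow_mem_strictTSet habove hstrict hA
  · rw [Set.Finite.mem_toFinset] at hB
    obtain ⟨habove, hstrict⟩ := isRowAbove_and_isStrictAbove_of_mem_strictTSet hB
    exact mem_index.2 ⟨habove, hstrict, replaceRow_zero_mem_strictTSet hB⟩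
  · obtain ⟨s, l, A⟩ := p
    obtain ⟨-, -, hA⟩ := mem_index.1 hp
    simp only [rowSlice_replaceRow, Function.update_self, rowTuple_replaceRow,
      rowTuple_eq_of_mem_strictTSet hA, replaceRow_zero_replaceRow hA]
  · exact replaceRow_replaceRow_zero (by simpa only [Set.Finite.mem_toFinset] using hB)
  · obtain ⟨habove, hstrict, hA⟩ := mem_index.1 hp
    exact (neg_one_pow_sT_replaceRow habove hstrict hA).symm

theorem finsum_strictTSet_eq_iteratedRowSum (n : ℕ) (k : Fin n → ℤ) :
    ∑ᶠ A ∈ strictTSet n k, (-1 : ℚ) ^ sT n A.1 A.2 = iteratedRowSum n k := by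
  induction n with
  | zero =>
    rw [strictTSet_zero, finsum_mem_singleton]
    simp [sT, invF, iteratedRowSum]
  | succ n ih =>
    rw [finsum_strictTSet_succ, funext ih, iteratedRowSum]
    exact rowSum_indicator_isStrictAbove _ fun l => iteratedRowSum_eq_zero_of_hasTriple

/-! ### Strictly increasing bottom rows -/

theorem row_lt_of_mem_strictTSet {n : ℕ} {k : Fin n → ℤ} (hk : StrictMono k) {A : MarkedArray}
    (hA : A ∈ strictTSet n k) {i j : ℕ} (hi : i ≤ n) (hj : 1 ≤ j) (hji : j + 1 ≤ i) :
    A.1 i j < A.1 i (j + 1) := by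
  obtain ⟨-, -, hbot, hrows⟩ := mem_strictTSet_iff.1 hA
  induction hi using Nat.decreasingInduction generalizing j with
  | self =>
    obtain ⟨j, rfl⟩ : ∃ j', j = j' + 1 := ⟨j - 1, by lia⟩
    rw [hbot, rowOf_val_add_one k ⟨j, by lia⟩, rowOf_val_add_one k ⟨j + 1, by lia⟩]
    exact hk (Fin.mk_lt_mk.2 j.lt_succ_self)
  | of_succ m hm ih =>
    exact (hrows m hm).2 j hj hji (ih hj (by lia)).le (ih (by lia) (by lia)).le

theorem strictTSet_of_strictMono {n : ℕ} {k : Fin n → ℤ} (hk : StrictMono k) :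
    strictTSet n k = (fun a => (a, ∅)) '' MTset n k := by
  ext ⟨a, S⟩
  constructor
  · intro hA
    have row_lt {i j : ℕ} := row_lt_of_mem_strictTSet hk hA (i := i) (j := j)
    obtain ⟨⟨⟨htri, hpos, -, hpar, hentry⟩, hbot⟩, -⟩ := hA
    obtain rfl : S = ∅ := Finset.eq_empty_of_forall_notMem fun ⟨i, j⟩ hp => by
      have := hpos _ hp
      have := hpar _ hp
      have := @row_lt (i - 1) (j - 1)
      grind
    exact ⟨a, ⟨⟨htri, fun i j hj hji hi => row_lt hi hj hji, fun i j hj hji hi =>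
      (hentry i j hj hji hi (by simp) (by simp)).1 (row_lt hi hj (by lia)).le⟩, hbot⟩, rfl⟩
  · rintro ⟨_, ⟨⟨htri, row_lt, hentry⟩, hbot⟩, ⟨⟩⟩
    refine ⟨⟨⟨htri, by simp, by simp, by simp, fun i j hj hji hi _ _ =>
      ⟨fun _ => hentry i j hj hji hi, fun h => ?_⟩⟩, hbot⟩, fun i j hj hji hi _ _ => ?_⟩
    · exact absurd (row_lt (i + 1) j hj (by lia) hi) h.not_gt
    · have := row_lt (i - 1) (j - 1)
      grind

theorem sT_empty_of_isMT {n : ℕ} {a : ℕ → ℕ → ℤ} (ha : IsMT n a) : sT n a ∅ = 0 := by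
  have : invF n a ∅ = ∅ := Finset.filter_eq_empty_iff.2 fun p _ hp =>
    (ha.2.1 (p.1 + 1) p.2 hp.1 (by lia) hp.2.2.1).not_gt hp.2.2.2.2.2
  rw [sT, this, Finset.card_empty]

theorem finsum_strictTSet_of_strictMono {n : ℕ} {k : Fin n → ℤ} (hk : StrictMono k) :
    ∑ᶠ A ∈ strictTSet n k, (-1 : ℚ) ^ sT n A.1 A.2 = (MTset n k).ncard := by
  have sign_eq_one : ∀ A ∈ strictTSet n k, (-1 : ℚ) ^ sT n A.1 A.2 = 1 := fun A hA => by
    rw [strictTSet_of_strictMono hk] at hA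
    obtain ⟨a, ha, rfl⟩ := hA
    rw [sT_empty_of_isMT ha.1, pow_zero]
  rw [finsum_mem_congr rfl sign_eq_one,
    finsum_mem_eq_finite_toFinset_sum _ (finite_strictTSet n k), Finset.sum_const, nsmul_one,
    ← Set.ncard_eq_toFinset_card _ _, strictTSet_of_strictMono hk,
    Set.ncard_image_of_injective _ (Prod.mk_left_injective ∅)]

/-- For every `n ≥ 1` and every `k ∈ ℤⁿ`, `α(n;k)` equals the signed sum over
those elements of `𝒯ₙ(k)` whose underlying array satisfies
`a_{i,j-1} ≤ a_{i,j} ≤ a_{i,j+1} → a_{i-1,j-1} < a_{i-1,j}`. -/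
theorem alpha_eq_signed_sum_TSet_strict (n : ℕ) (hn : 1 ≤ n)
    (α : (Fin n → ℤ) → ℚ) (hα : IsAlpha n α) (k : Fin n → ℤ) :
    α k = ∑ᶠ A ∈ {A ∈ TSet n k | StrictCond n A.1}, ((-1 : ℚ)) ^ (sT n A.1 A.2) := by
  obtain ⟨⟨P, -, hP⟩, hcount⟩ := hα
  obtain ⟨Q, hQ⟩ := mem_polyFun.1 (iteratedRowSum_mem_polyFun n)
  have hPQ : P = Q := mvPolynomial_eq_of_eval_eq_of_strictMono fun k hk => by
    rw [← hP, ← hQ, hcount k hk, ← finsum_strictTSet_eq_iteratedRowSum,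
      finsum_strictTSet_of_strictMono hk]
  rw [hP, hPQ, ← hQ]
  exact (finsum_strictTSet_eq_iteratedRowSum n k).symm
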